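/- arXiv:math/0502429 — 6 statements merged into one kernel-verified Lean document; each statement's English description precedes it below -/
import Mathlib

section
/- The star product is associative: with star-product data as given, the ℤ-bilinear product ⋆ on MonoidAlgebra R T determined on single terms by (r·g) ⋆ (s·h) = (r·s·∏_{λ∈Λ} e_λ^{n_λ(g,h)})·(g·h) satisfies (x ⋆ y) ⋆ z = x ⋆ (y ⋆ z) for all x, y, z in MonoidAlgebra R T. (Theorem 2.3 of the paper, stated at the algebraic generality at which it is proved.) -/
/-!
The exponents `n l` are the coboundary of `a l`, so each is an additive 2-cocycle on `T`, and
`c g h = ∏ l, e l ^ n l g h` is a multiplicative one. Thus `⋆` is the multiplication of `R[T]`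
twisted by `c`, and comparing the two bracketings of a triple product of single terms, the
cocycle identity for `c` is exactly associativity.
-/

section FactorSets

variable {T : Type*} [Mul T]

/-- An additively written factor set: a 2-cocycle on `T` with trivial action. Unlike in
`groupCohomology.IsCocycle₂`, the values need not form a group, so that exponents in `ℕ` fit. -/
def IsAddFactorSet {M : Type*} [Add M] (n : T → T → M) : Prop :=
  ∀ g h k, n g h + n (g * h) k = n h k + n g (h * k)

/-- A multiplicatively written factor set: a 2-cocycle on `T` with trivial action. The values need
not be invertible, as products of Euler classes may be zero divisors. -/
def IsMulFactorSet {M : Type*} [Mul M] (c : T → T → M) : Prop :=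
  ∀ g h k, c g h * c (g * h) k = c h k * c g (h * k)

theorem IsAddFactorSet.of_natCast_eq_coboundary {T A : Type*} [Semigroup T]
    [AddCommGroupWithOne A] [CharZero A] {a : T → A} {n : T → T → ℕ}
    (hn : ∀ g h, (n g h : A) = a g + a h - a (g * h)) : IsAddFactorSet n := by
  intro g h k
  apply Nat.cast_injective (R := A)
  rw [Nat.cast_add, Nat.cast_add, hn, hn, hn, hn, mul_assoc]
  abel

theorem IsAddFactorSet.isMulFactorSet_pow {M : Type*} [Monoid M] {n : T → T → ℕ}
    (hn : IsAddFactorSet n) (x : M) : IsMulFactorSet fun g h ↦ x ^ n g h := by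
  intro g h k
  simp only [← pow_add, hn g h k]

theorem IsMulFactorSet.prod {ι M : Type*} [CommMonoid M] {c : ι → T → T → M} (s : Finset ι)
    (hc : ∀ i ∈ s, IsMulFactorSet (c i)) :
    IsMulFactorSet fun g h ↦ ∏ i ∈ s, c i g h := by
  intro g h k
  simp only [← Finset.prod_mul_distrib]
  exact Finset.prod_congr rfl fun i hi ↦ hc i hi g h k

end FactorSets

section Bilinear

variable {S R T : Type*} [CommSemiring S]

theorem bilin_assoc_of_single [Semiring R] [Module S R]
    (star : MonoidAlgebra R T →ₗ[S] MonoidAlgebra R T →ₗ[S] MonoidAlgebra R T)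
    (hstar : ∀ (r s t : R) (g h k : T),
      star (star (.single g r) (.single h s)) (.single k t) =
        star (.single g r) (star (.single h s) (.single k t)))
    (x y z : MonoidAlgebra R T) : star (star x y) z = star x (star y z) := by
  induction x using MonoidAlgebra.induction_linear with
  | zero => simp only [map_zero, LinearMap.zero_apply]
  | add x x' hx hx' => simp only [map_add, LinearMap.add_apply, hx, hx']
  | single g r =>
    induction y using MonoidAlgebra.induction_linear with
    | zero => simp only [map_zero, LinearMap.zero_apply]
    | add y y' hy hy' => simp only [map_add, LinearMap.add_apply, hy, hy']
    | single h s =>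
      induction z using MonoidAlgebra.induction_linear with
      | zero => simp only [map_zero]
      | add z z' hz hz' => simp only [map_add, hz, hz']
      | single k t => exact hstar r s t g h k

theorem IsMulFactorSet.twisted_mul_assoc [CommSemiring R] [Module S R] [Semigroup T]
    {c : T → T → R} (hc : IsMulFactorSet c)
    (star : MonoidAlgebra R T →ₗ[S] MonoidAlgebra R T →ₗ[S] MonoidAlgebra R T)
    (hstar : ∀ (r s : R) (g h : T),
      star (.single g r) (.single h s) = .single (g * h) (r * s * c g h))
    (x y z : MonoidAlgebra R T) : star (star x y) z = star x (star y z) := by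
  refine bilin_assoc_of_single star (fun r s t g h k ↦ ?_) x y z
  have coeff_eq : r * s * c g h * t * c (g * h) k = r * (s * t * c h k) * c g (h * k) :=
    calc
      r * s * c g h * t * c (g * h) k = r * s * t * (c g h * c (g * h) k) := by ring
      _ = r * s * t * (c h k * c g (h * k)) := by rw [hc g h k]
      _ = r * (s * t * c h k) * c g (h * k) := by ring
  rw [hstar, hstar, hstar, hstar, coeff_eq, mul_assoc g h k]

end Bilinear

theorem star_product_assoc_general {T Λ A R S : Type*} [Semigroup T] [Fintype Λ]
    [AddCommGroupWithOne A] [CharZero A] [CommSemiring R] [CommSemiring S] [Module S R]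
    (a : Λ → T → A) (e : Λ → R) (n : Λ → T → T → ℕ)
    (hn : ∀ l g h, (n l g h : A) = a l g + a l h - a l (g * h))
    (star : MonoidAlgebra R T →ₗ[S] MonoidAlgebra R T →ₗ[S] MonoidAlgebra R T)
    (hstar : ∀ (r s : R) (g h : T),
      star (.single g r) (.single h s) = .single (g * h) (r * s * ∏ l, e l ^ n l g h))
    (x y z : MonoidAlgebra R T) : star (star x y) z = star x (star y z) :=
  have euler_factorSet : IsMulFactorSet fun g h ↦ ∏ l, e l ^ n l g h :=
    .prod Finset.univ fun l _ ↦
      (IsAddFactorSet.of_natCast_eq_coboundary (hn l)).isMulFactorSet_pow (e l)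
  euler_factorSet.twisted_mul_assoc star hstar x y z

/-- **Theorem 2.3 of Goldin–Holm–Knutson** (algebraic generality).
Star-product data: a commutative group `T`, a finite index set `Λ`, logweight
functions `a l : T → ℝ` taking values in `[0,1)` whose defects are integers,
a commutative ring `R`, Euler classes `e : Λ → R`, and natural numbers
`n l g h` whose real value is `a l g + a l h - a l (g*h)`.  The ℤ-bilinear
product `⋆` on `MonoidAlgebra R T` determined on single terms by
`(r·g) ⋆ (s·h) = (r·s·∏ l, e l ^ n l g h)·(g·h)` is associative. -/
theorem star_product_assoc
    {T : Type*} [CommGroup T]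
    {Λ : Type*} [Fintype Λ]
    (a : Λ → T → ℝ)
    (ha_mem : ∀ l (g : T), a l g ∈ Set.Ico (0 : ℝ) 1)
    (ha_int : ∀ l (g h : T), ∃ k : ℤ, a l g + a l h - a l (g * h) = k)
    {R : Type*} [CommRing R]
    (e : Λ → R)
    (n : Λ → T → T → ℕ)
    (hn : ∀ l (g h : T), (n l g h : ℝ) = a l g + a l h - a l (g * h))
    (star : MonoidAlgebra R T →ₗ[ℤ] MonoidAlgebra R T →ₗ[ℤ] MonoidAlgebra R T)
    (hstar : ∀ (r s : R) (g h : T),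
      star (MonoidAlgebra.single g r) (MonoidAlgebra.single h s)
        = MonoidAlgebra.single (g * h) (r * s * ∏ l, e l ^ n l g h)) :
    ∀ x y z : MonoidAlgebra R T, star (star x y) z = star x (star y z) :=
  star_product_assoc_general a e n hn star hstar
end

section
/- The binary star product iterates to the n-ary star product: with star-product data as given, for every n ≥ 1, all r₁,…,rₙ ∈ R and g₁,…,gₙ ∈ T, the left-associated iterated product ( … ((r₁·g₁) ⋆ (r₂·g₂)) ⋆ … ) ⋆ (rₙ·gₙ) equals ((∏ᵢ rᵢ)·∏_{λ∈Λ} e_λ^{m_λ})·(g₁g₂⋯gₙ), where m_λ is the natural number whose real value is a_λ(g₁) + … + a_λ(gₙ) − a_λ(g₁g₂⋯gₙ). (Equation (2.2) and the proof of Theorem 2.3: the n-fold product can be built from the 2-fold product.) -/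
/-!
Multiplying `g₁ ⋯ gₖ` by `gₖ₊₁` contributes to the exponent of `e l` the defect
`a l (g₁ ⋯ gₖ) + a l gₖ₊₁ - a l (g₁ ⋯ gₖ₊₁)`. Summed over `k`, these defects telescope to
`a l g₁ + ⋯ + a l g_N - a l (g₁ ⋯ g_N)`, which determines the exponent as a natural number.
-/

/-- The total defect `n g h₁ + n (g * h₁) h₂ + n (g * h₁ * h₂) h₃ + ⋯` accumulated when `g` is
multiplied on the right by the entries `h₁, h₂, h₃, …` of a list, where `n g h` is the defect of a
single multiplication. It is the exponent of an Euler class in an iterated star product. -/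
def accumulatedDefect {T : Type*} [Mul T] (n : T → T → ℕ) : T → List T → ℕ
  | _, [] => 0
  | g, h :: hs => n g h + accumulatedDefect n (g * h) hs

theorem cast_accumulatedDefect {T A : Type*} [Monoid T] [AddCommGroupWithOne A]
    {a : T → A} {n : T → T → ℕ} (hn : ∀ g h, (n g h : A) = a g + a h - a (g * h))
    (g : T) (hs : List T) :
    (accumulatedDefect n g hs : A) = a g + (hs.map a).sum - a (g * hs.prod) := by
  induction hs generalizing g with
  | nil => simp [accumulatedDefect]
  | cons h hs ih =>
    rw [accumulatedDefect, Nat.cast_add, hn, ih, List.map_cons, List.sum_cons, List.prod_cons,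
      mul_assoc]
    abel

section StarProduct

open MonoidAlgebra

variable {T Λ R : Type*} [Monoid T] [Fintype Λ] [CommSemiring R] {e : Λ → R} {n : Λ → T → T → ℕ}
  {star : MonoidAlgebra R T → MonoidAlgebra R T → MonoidAlgebra R T}

theorem foldl_star_single
    (hstar : ∀ (r s : R) (g h : T),
      star (single g r) (single h s) = single (g * h) (r * s * ∏ l, e l ^ n l g h))
    (g : T) (r : R) (xs : List (T × R)) :
    (xs.map fun x => single x.1 x.2).foldl star (single g r) =
      single (g * (xs.map Prod.fst).prod)
        (r * (xs.map Prod.snd).prod *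
          ∏ l, e l ^ accumulatedDefect (n l) g (xs.map Prod.fst)) := by
  induction xs generalizing g r with
  | nil => simp [accumulatedDefect]
  | cons x xs ih =>
    simp only [List.map_cons, List.foldl_cons, hstar, ih, List.prod_cons, accumulatedDefect,
      pow_add, Finset.prod_mul_distrib, mul_assoc g]
    congr 1
    ring

theorem star_product_nary_general {A : Type*} [AddCommGroupWithOne A] [CharZero A] {a : Λ → T → A}
    (hn : ∀ l g h, (n l g h : A) = a l g + a l h - a l (g * h))
    (hstar : ∀ (r s : R) (g h : T),
      star (single g r) (single h s) = single (g * h) (r * s * ∏ l, e l ^ n l g h))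
    (g : T) (r : R) (xs : List (T × R)) {m : Λ → ℕ}
    (hm : ∀ l, (m l : A) =
      a l g + ((xs.map Prod.fst).map (a l)).sum - a l (g * (xs.map Prod.fst).prod)) :
    (xs.map fun x => single x.1 x.2).foldl star (single g r) =
      single (g * (xs.map Prod.fst).prod)
        (r * (xs.map Prod.snd).prod * ∏ l, e l ^ m l) := by
  have exponent_eq (l : Λ) : accumulatedDefect (n l) g (xs.map Prod.fst) = m l :=
    Nat.cast_injective (R := A) ((cast_accumulatedDefect (hn l) g _).trans (hm l).symm)
  simp only [foldl_star_single hstar, exponent_eq]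

end StarProduct

/-- **Equation (2.2) / proof of Theorem 2.3 of Goldin–Holm–Knutson.**
With star-product data as in Definition 2.2, the binary star product iterates
to the n-ary star product: for every `n ≥ 1` (here `n = N + 1`), coefficients
`r i` and group elements `g i`, the left-associated iterated product
`(…((r₀·g₀) ⋆ (r₁·g₁)) ⋆ …) ⋆ (r_N·g_N)` equals
`((∏ i, r i)·∏ l, e l ^ m l)·(∏ i, g i)`, where `m l` is the natural number
whose real value is `∑ i, a l (g i) - a l (∏ i, g i)`. -/
theorem star_product_nary
    {T : Type*} [CommGroup T]
    {Λ : Type*} [Fintype Λ]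
    (a : Λ → T → ℝ)
    (ha_mem : ∀ l (g : T), a l g ∈ Set.Ico (0 : ℝ) 1)
    (ha_int : ∀ l (g h : T), ∃ k : ℤ, a l g + a l h - a l (g * h) = k)
    {R : Type*} [CommRing R]
    (e : Λ → R)
    (n : Λ → T → T → ℕ)
    (hn : ∀ l (g h : T), (n l g h : ℝ) = a l g + a l h - a l (g * h))
    (star : MonoidAlgebra R T →ₗ[ℤ] MonoidAlgebra R T →ₗ[ℤ] MonoidAlgebra R T)
    (hstar : ∀ (r s : R) (g h : T),
      star (MonoidAlgebra.single g r) (MonoidAlgebra.single h s)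
        = MonoidAlgebra.single (g * h) (r * s * ∏ l, e l ^ n l g h)) :
    ∀ (N : ℕ) (r : Fin (N + 1) → R) (g : Fin (N + 1) → T) (m : Λ → ℕ),
      (∀ l, (m l : ℝ) = (∑ i, a l (g i)) - a l (∏ i, g i)) →
      List.foldl (fun acc x => star acc x)
          (MonoidAlgebra.single (g 0) (r 0))
          (List.ofFn fun i : Fin N => MonoidAlgebra.single (g i.succ) (r i.succ))
        = MonoidAlgebra.single (∏ i, g i) ((∏ i, r i) * ∏ l, e l ^ m l) := by
  intro N r g m hm
  simpa [Function.comp_def, List.prod_ofFn, Fin.prod_univ_succ] using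
    star_product_nary_general hn hstar (g 0) (r 0) (List.ofFn fun i => (g i.succ, r i.succ))
      (by simpa [Function.comp_def, List.sum_ofFn, List.prod_ofFn, Fin.sum_univ_succ,
        Fin.prod_univ_succ] using hm)
end

section
/- The star product is graded with respect to the age-shifted real degree: with graded star-product data as given, for all g,h ∈ T, all p,q ∈ ℝ, all r ∈ A p and s ∈ A q, the coefficient r·s·∏_{λ∈Λ} e_λ^{n_λ(g,h)} of (r·g) ⋆ (s·h) lies in A(p + q + 2·age(g) + 2·age(h) − 2·age(g·h)); equivalently, assigning the single term r·g (with r ∈ A p) the degree p + 2·age(g) makes the star product degree-additive: deg((r·g) ⋆ (s·h)) = deg(r·g) + deg(s·h). (Theorem 2.5.) -/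
/-!
Each Euler class `e l` contributes `e l ^ n l g h`, of degree `2 * d l * n l g h`, to the
coefficient of the star product. Since `n l g h` is the defect of additivity of the logweight `a l`
at `(g, h)`, these degrees sum to twice the defect of additivity of the age.
-/

section StarProduct

variable {ι T Λ : Type*} [Ring ι] [Fintype Λ]

/-- The age of `g`: the sum of the logweights `a l g`, each weighted by the dimension `d l` of the
isotypic component `l`. Dimensions and logweights take values in the ring of degrees `ι`, which is
`ℝ` in the geometric setting. -/
def age (d : Λ → ι) (a : Λ → T → ι) (g : T) : ι :=
  ∑ l, d l * a l g

variable [Mul T]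

theorem age_add_age_sub_age_mul (d : Λ → ι) (a : Λ → T → ι) (g h : T) :
    age d a g + age d a h - age d a (g * h) = ∑ l, d l * (a l g + a l h - a l (g * h)) := by
  simp only [age, mul_sub, mul_add, Finset.sum_sub_distrib, Finset.sum_add_distrib]

variable {R S : Type*} [CommMonoid R] [SetLike S R]

theorem prod_pow_mem_age_defect (A : ι → S) [SetLike.GradedMonoid A]
    {a : Λ → T → ι} {d : Λ → ι} {e : Λ → R} (he : ∀ l, e l ∈ A (2 * d l))
    {n : Λ → ℕ} {g h : T} (hn : ∀ l, (n l : ι) = a l g + a l h - a l (g * h)) :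
    ∏ l, e l ^ n l ∈ A (2 * (age d a g + age d a h - age d a (g * h))) := by
  have degree_eq : 2 * (age d a g + age d a h - age d a (g * h)) = ∑ l, n l • (2 * d l) := by
    simp only [age_add_age_sub_age_mul, ← hn, Finset.mul_sum, ← mul_assoc, nsmul_eq_mul']
  rw [degree_eq]
  exact SetLike.prod_pow_mem_graded A _ e n fun l _ ↦ he l

theorem star_product_graded_general (A : ι → S) [SetLike.GradedMonoid A]
    {a : Λ → T → ι} {d : Λ → ι} {e : Λ → R} (he : ∀ l, e l ∈ A (2 * d l))
    {n : Λ → T → T → ℕ} (hn : ∀ l g h, (n l g h : ι) = a l g + a l h - a l (g * h))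
    (g h : T) {p q : ι} {r s : R} (hr : r ∈ A p) (hs : s ∈ A q) :
    r * s * ∏ l, e l ^ n l g h ∈
      A (p + q + 2 * age d a g + 2 * age d a h - 2 * age d a (g * h)) := by
  have coeff_mem := SetLike.mul_mem_graded (SetLike.mul_mem_graded hr hs)
    (prod_pow_mem_age_defect A he fun l ↦ hn l g h)
  rwa [mul_sub, mul_add, ← add_sub_assoc, ← add_assoc] at coeff_mem

end StarProduct

/-- **Theorem 2.5 of Goldin–Holm–Knutson.**  With graded star-product data
(`R` graded by real numbers via `A : ℝ → AddSubgroup R` with `1 ∈ A 0` and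
`A p * A q ⊆ A (p+q)`, dimensions `d : Λ → ℕ` with `e l ∈ A (2·d l)`), the
star product is graded with respect to the age-shifted real degree: for
`r ∈ A p` and `s ∈ A q`, the coefficient `r·s·∏ l, e l ^ n l g h` of
`(r·g) ⋆ (s·h)` lies in `A (p + q + 2·age g + 2·age h − 2·age (g·h))`, where
`age g = ∑ l, d l · a l g`. -/
theorem star_product_graded
    {T : Type*} [CommGroup T]
    {Λ : Type*} [Fintype Λ]
    (a : Λ → T → ℝ)
    (ha_mem : ∀ l (g : T), a l g ∈ Set.Ico (0 : ℝ) 1)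
    (ha_int : ∀ l (g h : T), ∃ k : ℤ, a l g + a l h - a l (g * h) = k)
    {R : Type*} [CommRing R]
    (e : Λ → R)
    (n : Λ → T → T → ℕ)
    (hn : ∀ l (g h : T), (n l g h : ℝ) = a l g + a l h - a l (g * h))
    (A : ℝ → AddSubgroup R)
    (hone : (1 : R) ∈ A 0)
    (hmul : ∀ (p q : ℝ) (x y : R), x ∈ A p → y ∈ A q → x * y ∈ A (p + q))
    (d : Λ → ℕ)
    (he : ∀ l, e l ∈ A (2 * (d l : ℝ))) :
    ∀ (g h : T) (p q : ℝ) (r s : R), r ∈ A p → s ∈ A q →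
      r * s * ∏ l, e l ^ n l g h ∈
        A (p + q + 2 * (∑ l, (d l : ℝ) * a l g) + 2 * (∑ l, (d l : ℝ) * a l h)
            - 2 * (∑ l, (d l : ℝ) * a l (g * h))) := by
  have : SetLike.GradedMonoid A := { one_mem := hone, mul_mem := hmul }
  exact fun g h _ _ _ _ hr hs ↦ star_product_graded_general A he hn g h hr hs
end

section
/- Cancellation identity at the heart of Theorem 3.3 (the restriction map is a ring homomorphism from the ⌣ product to the ⋆ product): for all real numbers x and y, Int.fract(x) + Int.fract(y) − Int.fract(x+y) = ε + f, where ε := 1 if Int.fract(x) + Int.fract(y) + Int.fract(−(x+y)) = 2 and ε := 0 otherwise, and f := 1 if Int.fract(x+y) = 0 and not both Int.fract(x) = 0 and Int.fract(y) = 0, and f := 0 otherwise. -/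
/-! The difference `fract x + fract y - fract (x + y)` is the carry of addition modulo `1`, so it is
`1` or `0` according to whether `1 ≤ fract x + fract y`. When `fract (x + y) ≠ 0`, the third
logweight is `1 - fract (x + y)`, so the logweights sum to `1` plus the carry and `ε` is the carry.
When `fract (x + y) = 0`, the third logweight vanishes and `fract x + fract y` is itself the carry,
which is `0` only if both summands are, so `f` is the carry. -/

section LinearOrderedRing

open Int (fract)

variable {R : Type*} [Ring R] [LinearOrder R] [IsOrderedRing R] [FloorRing R]

theorem fract_add_of_fract_add_fract_lt_one {x y : R} (h : fract x + fract y < 1) :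
    fract (x + y) = fract x + fract y :=
  Int.fract_eq_iff.mpr
    ⟨add_nonneg (Int.fract_nonneg x) (Int.fract_nonneg y), h, ⌊x⌋ + ⌊y⌋, by
      rw [Int.cast_add, add_sub_add_comm, Int.self_sub_fract, Int.self_sub_fract]⟩

theorem fract_add_of_one_le_fract_add_fract {x y : R} (h : 1 ≤ fract x + fract y) :
    fract (x + y) = fract x + fract y - 1 := by
  have lt_one : fract x + fract y - 1 < 1 :=
    sub_lt_iff_lt_add.mpr (add_lt_add (Int.fract_lt_one x) (Int.fract_lt_one y))
  refine Int.fract_eq_iff.mpr ⟨sub_nonneg.mpr h, lt_one, ⌊x⌋ + ⌊y⌋ + 1, ?_⟩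
  rw [← sub_add, add_sub_add_comm, Int.self_sub_fract, Int.self_sub_fract]
  push_cast
  rfl

theorem fract_add_fract_sub_fract_add (x y : R) :
    fract x + fract y - fract (x + y) = if 1 ≤ fract x + fract y then 1 else 0 := by
  split_ifs with h
  · rw [fract_add_of_one_le_fract_add_fract h, sub_sub_cancel]
  · rw [fract_add_of_fract_add_fract_lt_one (not_le.mp h), sub_self]

theorem fract_add_fract_add_fract_neg_add_eq_two_iff (x y : R) :
    fract x + fract y + fract (-(x + y)) = 2 ↔
      fract (x + y) ≠ 0 ∧ 1 ≤ fract x + fract y := by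
  by_cases h : fract (x + y) = 0
  · have sum_lt_two : fract x + fract y < 2 :=
      one_add_one_eq_two (R := R) ▸ add_lt_add (Int.fract_lt_one x) (Int.fract_lt_one y)
    simp only [h, Int.fract_neg_eq_zero.mpr h, add_zero, sum_lt_two.ne, ne_eq, not_true_eq_false,
      false_and]
  · have sum_eq_one_add_carry : fract x + fract y + fract (-(x + y)) =
        1 + if 1 ≤ fract x + fract y then 1 else 0 := by
      rw [← fract_add_fract_sub_fract_add, Int.fract_neg h]
      abel
    rw [sum_eq_one_add_carry]
    split_ifs with hcarry <;> simp [h, hcarry, one_add_one_eq_two]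

theorem one_le_fract_add_fract_iff_of_fract_add_eq_zero {x y : R} (h : fract (x + y) = 0) :
    1 ≤ fract x + fract y ↔ ¬(fract x = 0 ∧ fract y = 0) := by
  rw [← add_eq_zero_iff_of_nonneg (Int.fract_nonneg x) (Int.fract_nonneg y), ← not_lt, not_iff_not]
  constructor
  · intro sum_lt_one
    rw [← fract_add_of_fract_add_fract_lt_one sum_lt_one, h]
  · intro sum_eq_zero
    exact sum_eq_zero.trans_lt one_pos

theorem fract_epsilon_plus_f_general (x y : R) :
    fract x + fract y - fract (x + y) =
      (if fract x + fract y + fract (-(x + y)) = 2 then 1 else 0) +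
        (if fract (x + y) = 0 ∧ ¬(fract x = 0 ∧ fract y = 0) then 1 else 0) := by
  rw [fract_add_fract_sub_fract_add]
  simp only [fract_add_fract_add_fract_neg_add_eq_two_iff]
  by_cases h : fract (x + y) = 0
  · simp only [h, one_le_fract_add_fract_iff_of_fract_add_eq_zero h, ne_eq, not_true_eq_false,
      false_and, true_and, if_false, zero_add]
  · simp only [h, ne_eq, not_false_eq_true, false_and, true_and, if_false, add_zero]

end LinearOrderedRing

/-- **The cancellation identity at the heart of Theorem 3.3 of
Goldin–Holm–Knutson** (the restriction map is a ring homomorphism from the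
`⌣` product to the `⋆` product): for all reals `x`, `y`,
`fract x + fract y − fract (x+y) = ε + f`, where `ε` is the indicator that
the three logweights `fract x`, `fract y`, `fract (−(x+y))` sum to `2`
(the obstruction-bundle condition), and `f` is the indicator that
`fract (x+y) = 0` while not both `fract x = 0` and `fract y = 0`
(the normal-bundle condition). -/
theorem fract_epsilon_plus_f (x y : ℝ) :
    Int.fract x + Int.fract y - Int.fract (x + y)
      = (if Int.fract x + Int.fract y + Int.fract (-(x + y)) = 2
            then (1 : ℝ) else 0)
        + (if Int.fract (x + y) = 0 ∧ ¬(Int.fract x = 0 ∧ Int.fract y = 0)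
            then (1 : ℝ) else 0) :=
  fract_epsilon_plus_f_general x y
end

section
/- Finite common kernel of torus characters is equivalent to rational spanning (the computation underlying Lemma 5.2): let n and N be natural numbers and λ : Fin N → (Fin n → ℤ) a family of integer weight vectors. Then the set S := { x : Fin n → AddCircle (1 : ℝ) | for every i : Fin N, ∑_j (λ i j) • (x j) = 0 } (the common kernel in the torus (ℝ/ℤ)ⁿ of the characters determined by the λ i) is finite if and only if the family of vectors (fun j => ((λ i j : ℚ))) for i : Fin N spans (Fin n → ℚ) as a ℚ-vector space. -/
/-!
If the weights span rationally, then a nonzero multiple of each standard basis vector is an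
integral combination of weights, so every coordinate of a point of the common kernel is torsion of
bounded order, and the circle has only finitely many such points. If they do not, some nonzero
integral vector `b` is orthogonal to all of them; the points `(b j • u)ⱼ` then lie in the common
kernel, and their `k`-th coordinates already fill the circle when `b k ≠ 0`, because the circle is
divisible.
-/

open scoped nonZeroDivisors

namespace CommonKernel

section Denominators

variable {ι κ R K : Type*} [CommRing R] [CommRing K] [Algebra R K] [IsFractionRing R K]

theorem exists_smul_mem_span_of_algebraMap_mem_span {lam : ι → κ → R} {v : κ → R}
    (hv : (fun j => algebraMap R K (v j)) ∈
      Submodule.span K (Set.range fun i j => algebraMap R K (lam i j))) :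
    ∃ d ∈ R⁰, d • v ∈ Submodule.span R (Set.range lam) := by
  let toK : (κ → R) →ₗ[R] (κ → K) := (Algebra.linearMap R K).compLeft κ
  obtain ⟨w, hw, d, hvw⟩ := (IsLocalization.mem_span_iff R⁰).mp hv
  have hrange : (Set.range fun i j => algebraMap R K (lam i j)) = toK '' Set.range lam :=
    Set.range_comp toK lam
  rw [hrange, ← Submodule.map_span] at hw
  obtain ⟨c, hc, rfl⟩ := hw
  refine ⟨d, d.2, ?_⟩
  suffices hdv : (d : R) • v = c by rwa [hdv]
  funext j
  apply IsFractionRing.injective R K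
  calc algebraMap R K (d * v j)
      = (algebraMap R K d * IsLocalization.mk' K 1 d) * algebraMap R K (c j) := by
        rw [map_mul, mul_assoc]
        exact congrArg (algebraMap R K d * ·) (congrFun hvw j)
    _ = algebraMap R K (c j) := by rw [IsLocalization.mk'_spec', map_one, one_mul]

end Denominators

section Orthogonal

variable {ι κ K : Type*} [Fintype κ] [Field K]

theorem exists_ne_zero_forall_dotProduct_eq_zero {p : Submodule K (κ → K)} (hp : p ≠ ⊤) :
    ∃ v ≠ 0, ∀ w ∈ p, v ⬝ᵥ w = 0 := by
  classical
  obtain ⟨f, hf, hpf⟩ := p.exists_le_ker_of_lt_top hp.lt_top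
  obtain ⟨v, rfl⟩ := (dotProductEquiv K κ).surjective f
  exact ⟨v, by simpa using hf, hpf⟩

theorem exists_ne_zero_forall_dotProduct_eq_zero_of_span_ne_top {R : Type*} [CommRing R]
    [Algebra R K] [IsFractionRing R K] {lam : ι → κ → R}
    (hspan : Submodule.span K (Set.range fun i j => algebraMap R K (lam i j)) ≠ ⊤) :
    ∃ b ≠ 0, ∀ i, lam i ⬝ᵥ b = 0 := by
  obtain ⟨v, hv, hvlam⟩ := exists_ne_zero_forall_dotProduct_eq_zero hspan
  obtain ⟨d, hd⟩ := IsLocalization.exist_integer_multiples_of_finite R⁰ v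
  choose b hb using hd
  have hb_smul : algebraMap R K ∘ b = algebraMap R K d • v := by
    funext j
    exact (hb j).trans (Algebra.smul_def _ _)
  have hvlam_eq (i : ι) : v ⬝ᵥ (algebraMap R K ∘ lam i) = 0 :=
    hvlam _ (Submodule.subset_span ⟨i, rfl⟩)
  refine ⟨b, ?_, fun i => IsFractionRing.injective R K ?_⟩
  · rintro rfl
    have hdK : algebraMap R K d ≠ 0 := (IsLocalization.map_units K d).ne_zero
    exact smul_ne_zero hdK hv (hb_smul.symm.trans (by ext; simp))
  · calc algebraMap R K (lam i ⬝ᵥ b)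
        = (algebraMap R K ∘ lam i) ⬝ᵥ (algebraMap R K d • v) := by
          rw [← hb_smul, RingHom.map_dotProduct]
      _ = algebraMap R K d * (v ⬝ᵥ (algebraMap R K ∘ lam i)) := by
          rw [dotProduct_smul, dotProduct_comm, smul_eq_mul]
      _ = algebraMap R K 0 := by
          rw [hvlam_eq, mul_zero, map_zero]

end Orthogonal

section Kernel

variable {ι κ R A : Type*} [Fintype κ] [Semiring R] [AddCommMonoid A] [Module R A]
  {lam : ι → κ → R}

theorem sum_smul_eq_zero_of_mem_span {x : κ → A} (hx : ∀ i, ∑ j, lam i j • x j = 0)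
    {c : κ → R} (hc : c ∈ Submodule.span R (Set.range lam)) : ∑ j, c j • x j = 0 := by
  have hle : Submodule.span R (Set.range lam) ≤ (Fintype.linearCombination R x).ker :=
    Submodule.span_le.mpr (Set.range_subset_iff.mpr hx)
  exact hle hc

theorem finite_of_forall_exists_smul_single_mem_span [DecidableEq κ]
    (htors : ∀ d ∈ R⁰, {a : A | d • a = 0}.Finite)
    (hspan : ∀ k, ∃ d ∈ R⁰, d • Pi.single k (1 : R) ∈ Submodule.span R (Set.range lam)) :
    {x : κ → A | ∀ i, ∑ j, lam i j • x j = 0}.Finite := by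
  choose d hd hmem using hspan
  refine (Set.Finite.pi fun k => htors (d k) (hd k)).subset fun x hx k _ => ?_
  calc d k • x k = ∑ j, (d k • Pi.single k (1 : R) : κ → R) j • x j := by
        simp [Pi.single_apply]
    _ = 0 := sum_smul_eq_zero_of_mem_span hx (hmem k)

theorem infinite_of_forall_dotProduct_eq_zero [DivisibleBy A R] [Infinite A] {b : κ → R}
    (hb : b ≠ 0) (hlam : ∀ i, lam i ⬝ᵥ b = 0) :
    {x : κ → A | ∀ i, ∑ j, lam i j • x j = 0}.Infinite := by
  obtain ⟨k, hk⟩ := Function.ne_iff.mp hb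
  intro hfin
  refine Set.infinite_univ (hfin.of_surjOn (fun x => x k) fun a _ => ?_)
  obtain ⟨u, rfl⟩ := DivisibleBy.surjective_smul A R hk a
  refine ⟨fun j => b j • u, fun i => ?_, rfl⟩
  calc ∑ j, lam i j • b j • u = (lam i ⬝ᵥ b) • u := by
        simp only [dotProduct, Finset.sum_smul, mul_smul]
    _ = 0 := by rw [hlam, zero_smul]

end Kernel

section AddCircle

variable {𝕜 : Type*} [AddCommGroup 𝕜] [LinearOrder 𝕜] [IsOrderedAddMonoid 𝕜] (p : 𝕜)

theorem infinite_addCircle [Archimedean 𝕜] [DenselyOrdered 𝕜] [hp : Fact (0 < p)] :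
    Infinite (AddCircle p) :=
  (AddCircle.equivIco p 0).infinite_iff.mpr
    (Set.Ico_infinite (lt_add_of_pos_right 0 hp.out)).to_subtype

theorem finite_setOf_zsmul_eq_zero_addCircle {d : ℤ} (hd : d ≠ 0) :
    {u : AddCircle p | d • u = 0}.Finite := by
  simpa only [natAbs_nsmul_eq_zero] using AddCircle.finite_torsion p (Int.natAbs_pos.mpr hd)

end AddCircle

end CommonKernel

open CommonKernel

theorem common_kernel_finite_iff_rational_span_general
    {ι κ R K A : Type*} [Fintype κ] [CommRing R] [Field K] [Algebra R K] [IsFractionRing R K]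
    [AddCommGroup A] [Module R A] [DivisibleBy A R] [Infinite A]
    (htors : ∀ d ∈ R⁰, {a : A | d • a = 0}.Finite) (lam : ι → κ → R) :
    {x : κ → A | ∀ i, ∑ j, lam i j • x j = 0}.Finite
      ↔ Submodule.span K (Set.range fun i j => algebraMap R K (lam i j)) = ⊤ := by
  classical
  constructor
  · contrapose
    intro hspan
    obtain ⟨b, hb, hlam⟩ := exists_ne_zero_forall_dotProduct_eq_zero_of_span_ne_top hspan
    exact infinite_of_forall_dotProduct_eq_zero hb hlam
  · intro hspan
    refine finite_of_forall_exists_smul_single_mem_span htors fun k => ?_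
    exact exists_smul_mem_span_of_algebraMap_mem_span (K := K) (hspan ▸ Submodule.mem_top)

/-- **The computation underlying Lemma 5.2 of Goldin–Holm–Knutson.**  Given
integer weight vectors `lam i : Fin n → ℤ` for `i : Fin N`, the common kernel
in the torus `(ℝ/ℤ)ⁿ` of the characters `x ↦ ∑ j, (lam i j) • x j` is finite
if and only if the rationalized vectors `(fun j => (lam i j : ℚ))` span
`Fin n → ℚ` over ℚ.  (An element `g` of a torus is a finite stabilizer iff at
some fixed point the weights with logweight `a_λ(g) = 0` span the weight
lattice rationally.) -/
theorem common_kernel_finite_iff_rational_span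
    (n N : ℕ) (lam : Fin N → Fin n → ℤ) :
    ({x : Fin n → AddCircle (1 : ℝ) | ∀ i : Fin N, ∑ j, lam i j • x j = 0}).Finite
      ↔ Submodule.span ℚ
          (Set.range fun i : Fin N => fun j : Fin n => ((lam i j : ℚ))) = ⊤ := by
  have : Fact ((0 : ℝ) < 1) := ⟨one_pos⟩
  have := infinite_addCircle (1 : ℝ)
  exact common_kernel_finite_iff_rational_span_general (fun _ hd =>
    finite_setOf_zsmul_eq_zero_addCircle 1 (nonZeroDivisors.ne_zero hd)) lam
end

section
/- Torsion in the integral Chen-Ruan cohomology ring ℤ[u,α]/⟨u² − α², 2u³, 2uα⟩ in all high degrees: in the polynomial ring ℤ[u,α] (MvPolynomial over ℤ in two variables u and α), let I be the ideal generated by u² − α², 2·u³ and 2·u·α. Then for every natural number n ≥ 3: 2·uⁿ ∈ I and 2·u^{n−1}·α ∈ I, while uⁿ ∉ I, u^{n−1}·α ∉ I, and uⁿ − u^{n−1}·α ∉ I. (Hence in the quotient ring the images of uⁿ and u^{n−1}·α are distinct nonzero 2-torsion elements for every n ≥ 3.) -/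
/-!
Modulo `2` the relations `u² - α²`, `2u³`, `2uα` reduce to `(u - α)² = 0`, so `u ↦ 1`, `α ↦ 1 + ε`
defines a ring homomorphism from the quotient to the dual numbers over `R ⧸ (2)`. It sends
`a uᵏ⁺¹ + b uᵏ α` to `(a + b) + b ε`, which vanishes only if `2` divides `a` and `b`. For `k ≥ 2`
the converse holds as well, since `2uᵏ⁺¹` and `2uᵏα` are multiples of `2u³` and `2uα`.
-/

open MvPolynomial

/-- The ideal `⟨u² - α², 2u³, 2uα⟩` of relations of the integral Chen-Ruan cohomology of
`ℙ²_{1,2,1}`, for elements `u` and `α` of any commutative ring, so that it can be transported along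
ring homomorphisms. -/
def chenRuanIdeal {A : Type*} [CommRing A] (u α : A) : Ideal A :=
  Ideal.span {u ^ 2 - α ^ 2, 2 * u ^ 3, 2 * u * α}

namespace chenRuanIdeal

section CommRing

variable {A B : Type*} [CommRing A] [CommRing B]

theorem map_eq (f : A →+* B) (u α : A) :
    (chenRuanIdeal u α).map f = chenRuanIdeal (f u) (f α) := by
  simp [chenRuanIdeal, Ideal.map_span, Set.image_insert_eq, map_ofNat f 2]

theorem eq_span_sub_sq (h : (2 : A) = 0) (u α : A) :
    chenRuanIdeal u α = Ideal.span {(u - α) ^ 2} := by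
  have sub_sq_eq_sq_sub_sq : (u - α) ^ 2 = u ^ 2 - α ^ 2 := by
    linear_combination (α ^ 2 - u * α) * h
  simp [chenRuanIdeal, h, sub_sq_eq_sq_sub_sq, Ideal.span_insert]

theorem two_mul_pow_mem (u α : A) {n : ℕ} (hn : 3 ≤ n) :
    2 * u ^ n ∈ chenRuanIdeal u α := by
  have generator_mem : 2 * u ^ 3 ∈ chenRuanIdeal u α := Ideal.subset_span (by simp)
  exact Ideal.mem_of_dvd _ (mul_dvd_mul_left 2 (pow_dvd_pow u hn)) generator_mem

theorem two_mul_pow_mul_mem (u α : A) {n : ℕ} (hn : n ≠ 0) :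
    2 * u ^ n * α ∈ chenRuanIdeal u α := by
  have generator_mem : 2 * u * α ∈ chenRuanIdeal u α := Ideal.subset_span (by simp)
  exact Ideal.mem_of_dvd _ (mul_dvd_mul_right (mul_dvd_mul_left 2 (dvd_pow_self u hn)) α)
    generator_mem

end CommRing

section Polynomial

variable {R : Type*} [CommRing R]

variable (R) in
/-- The evaluation `u ↦ 1`, `α ↦ 1 + ε` in the dual numbers over `R ⧸ (2)`. It annihilates
`chenRuanIdeal u α` and so detects polynomials outside that ideal. -/
noncomputable def dualEval :
    MvPolynomial (Fin 2) R →ₐ[R] DualNumber (R ⧸ Ideal.span {(2 : R)}) :=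
  aeval ![1, 1 + DualNumber.eps]

theorem dualEval_eq_zero_of_mem {p : MvPolynomial (Fin 2) R}
    (hp : p ∈ chenRuanIdeal (X 0) (X 1)) : dualEval R p = 0 := by
  have two_eq_zero : (2 : DualNumber (R ⧸ Ideal.span {(2 : R)})) = 0 := by
    have h : (2 : R ⧸ Ideal.span {(2 : R)}) = 0 :=
      Ideal.Quotient.eq_zero_iff_mem.2 (Ideal.mem_span_singleton_self 2)
    simpa only [map_ofNat, map_zero] using
      congrArg (algebraMap _ (DualNumber (R ⧸ Ideal.span {(2 : R)}))) h
  have map_eq_bot : (chenRuanIdeal (X 0) (X 1)).map (dualEval R).toRingHom = ⊥ := by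
    rw [map_eq, eq_span_sub_sq two_eq_zero, Ideal.span_singleton_eq_bot]
    simp [dualEval, sq]
  exact (Ideal.map_eq_bot_iff_le_ker _).1 map_eq_bot hp

theorem dualEval_C_mul_pow_add (a b : R) (k : ℕ) :
    dualEval R (C a * X 0 ^ (k + 1) + C b * X 0 ^ k * X 1) =
      algebraMap R _ (a + b) + algebraMap R _ b * DualNumber.eps := by
  simp only [dualEval, map_add, map_mul, algHom_C, map_pow, aeval_X, Matrix.cons_val_zero,
    one_pow, mul_one, Matrix.cons_val_one]
  ring

theorem dvd_and_dvd_of_mem {a b : R} {k : ℕ}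
    (h : C a * X 0 ^ (k + 1) + C b * X 0 ^ k * X 1 ∈
      chenRuanIdeal (X 0 : MvPolynomial (Fin 2) R) (X 1)) : 2 ∣ a ∧ 2 ∣ b := by
  have eval_eq_zero := (dualEval_C_mul_pow_add a b k).symm.trans (dualEval_eq_zero_of_mem h)
  have dvd_add : 2 ∣ a + b := by
    simpa [TrivSqZeroExt.algebraMap_eq_inl', ← map_add, Ideal.Quotient.eq_zero_iff_mem,
      Ideal.mem_span_singleton] using congrArg TrivSqZeroExt.fst eval_eq_zero
  have dvd_right : 2 ∣ b := by
    simpa [TrivSqZeroExt.algebraMap_eq_inl', Ideal.Quotient.eq_zero_iff_mem,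
      Ideal.mem_span_singleton] using congrArg TrivSqZeroExt.snd eval_eq_zero
  exact ⟨(dvd_add_left dvd_right).1 dvd_add, dvd_right⟩

theorem mem_iff_dvd_and_dvd {a b : R} {k : ℕ} (hk : 2 ≤ k) :
    C a * X 0 ^ (k + 1) + C b * X 0 ^ k * X 1 ∈
      chenRuanIdeal (X 0 : MvPolynomial (Fin 2) R) (X 1) ↔ 2 ∣ a ∧ 2 ∣ b := by
  refine ⟨dvd_and_dvd_of_mem, ?_⟩
  rintro ⟨⟨c, rfl⟩, ⟨d, rfl⟩⟩
  have eq_combination : C (2 * c) * X 0 ^ (k + 1) + C (2 * d) * X 0 ^ k * X 1 =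
      C c * (2 * X 0 ^ (k + 1)) + C d * (2 * X 0 ^ k * X 1 : MvPolynomial (Fin 2) R) := by
    simp only [map_mul, map_ofNat C 2]
    ring
  rw [eq_combination]
  exact add_mem (Ideal.mul_mem_left _ _ (two_mul_pow_mem _ _ (by omega)))
    (Ideal.mul_mem_left _ _ (two_mul_pow_mul_mem _ _ (by omega)))

end Polynomial

end chenRuanIdeal

theorem chen_ruan_P121_torsion_general {R : Type*} [CommRing R] (h2 : ¬IsUnit (2 : R))
    (n : ℕ) (hn : 3 ≤ n) :
    let u : MvPolynomial (Fin 2) R := X 0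
    let α : MvPolynomial (Fin 2) R := X 1
    let I : Ideal (MvPolynomial (Fin 2) R) :=
      Ideal.span {u ^ 2 - α ^ 2, 2 * u ^ 3, 2 * u * α}
    2 * u ^ n ∈ I ∧ 2 * u ^ (n - 1) * α ∈ I ∧
      u ^ n ∉ I ∧ u ^ (n - 1) * α ∉ I ∧ u ^ n - u ^ (n - 1) * α ∉ I := by
  intro u α I
  obtain ⟨k, rfl⟩ : ∃ k, n = k + 1 := ⟨n - 1, by omega⟩
  have mem_iff (a b : R) : C a * u ^ (k + 1) + C b * u ^ k * α ∈ I ↔ 2 ∣ a ∧ 2 ∣ b :=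
    chenRuanIdeal.mem_iff_dvd_and_dvd (by omega)
  rw [isUnit_iff_dvd_one] at h2
  rw [Nat.add_sub_cancel]
  refine ⟨?_, ?_, ?_, ?_, ?_⟩
  · simpa [map_ofNat C 2] using mem_iff 2 0
  · simpa [map_ofNat C 2] using mem_iff 0 2
  · simpa [h2] using mem_iff 1 0
  · simpa [h2] using mem_iff 0 1
  · simpa [h2, sub_eq_add_neg] using mem_iff 1 (-1)

/-- **Torsion in `H*_CR(ℙ²_{1,2,1}; ℤ) = ℤ[u,α]/⟨u² − α², 2u³, 2uα⟩` in all
high degrees** (Goldin–Holm–Knutson, Section 8).  In `ℤ[u,α]` with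
`I = ⟨u² − α², 2u³, 2uα⟩`, for every `n ≥ 3` one has `2uⁿ ∈ I` and
`2u^{n−1}α ∈ I`, while `uⁿ ∉ I`, `u^{n−1}α ∉ I`, and `uⁿ − u^{n−1}α ∉ I`;
hence in the quotient the images of `uⁿ` and `u^{n−1}α` are distinct nonzero
2-torsion elements, so the integral Chen-Ruan cohomology of `ℙ²_{1,2,1}`
differs even as a module from the cohomology of its crepant resolution. -/
theorem chen_ruan_P121_torsion (n : ℕ) (hn : 3 ≤ n) :
    let u : MvPolynomial (Fin 2) ℤ := MvPolynomial.X 0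
    let α : MvPolynomial (Fin 2) ℤ := MvPolynomial.X 1
    let I : Ideal (MvPolynomial (Fin 2) ℤ) :=
      Ideal.span {u ^ 2 - α ^ 2, 2 * u ^ 3, 2 * u * α}
    2 * u ^ n ∈ I ∧ 2 * u ^ (n - 1) * α ∈ I ∧
      u ^ n ∉ I ∧ u ^ (n - 1) * α ∉ I ∧ u ^ n - u ^ (n - 1) * α ∉ I :=
  chen_ruan_P121_torsion_general Int.prime_two.not_isUnit n hn
end
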